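/- arXiv:1808.05435 — 2 statements merged into one kernel-verified Lean document; each statement's English description precedes it below -/
import Mathlib

section
/- Let A be a complex semisimple unital Banach algebra, let p ∈ A be an idempotent and q ∈ A, and suppose there exist a neighbourhood N_p of p and a neighbourhood N_{1−p} of 1 − p such that #σ(qx) = #σ(px) < ∞ for all x ∈ N_p ∪ N_{1−p}. Then q is a scalar multiple of p or q is a scalar multiple of the identity. -/
open Complex

noncomputable section

/-- The nonzero spectrum `σ'(x) = σ(x) \ {0}` of an element of a complex algebra. -/
def nzSpec {A : Type*} [Ring A] [Algebra ℂ A] (x : A) : Set ℂ :=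
  spectrum ℂ x \ {0}

/-- The spectral rank of an element: `rank a = sup_{x ∈ A} #σ'(xa)`, valued in `ℕ∞`. -/
noncomputable def srank {A : Type*} [Ring A] [Algebra ℂ A] (a : A) : ℕ∞ :=
  ⨆ x : A, (nzSpec (x * a)).encard

/-- The socle of `A`: the set of finite-rank elements. -/
def socle (A : Type*) [Ring A] [Algebra ℂ A] : Set A :=
  {a : A | srank a ≠ ⊤}

/-- `A` is (Jacobson) semisimple: its Jacobson radical is `{0}`. -/
def JacobsonSemisimple (A : Type*) [Ring A] : Prop :=
  TwoSidedIdeal.jacobson (⊥ : TwoSidedIdeal A) = ⊥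

/-- `Soc A` is a minimal two-sided ideal: it is a nonzero two-sided ideal containing
no two-sided ideals other than `{0}` and itself. -/
def SocleIsMinimalTwoSidedIdeal (A : Type*) [Ring A] [Algebra ℂ A] : Prop :=
  ∃ I : TwoSidedIdeal A, (I : Set A) = socle A ∧ I ≠ ⊥ ∧
    ∀ J : TwoSidedIdeal A, J ≤ I → J = ⊥ ∨ J = I

/-- `A` is a prime algebra: all nonzero two-sided ideals `I, J` satisfy `IJ ≠ {0}`. -/
def IsPrimeAlgebra (A : Type*) [Ring A] : Prop :=
  ∀ I J : TwoSidedIdeal A, I ≠ ⊥ → J ≠ ⊥ → ∃ x ∈ I, ∃ y ∈ J, x * y ≠ 0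

/-- The left annihilator of the socle equals `{0}`. -/
def LeftAnnSocleTrivial (A : Type*) [Ring A] [Algebra ℂ A] : Prop :=
  {x : A | ∀ y ∈ socle A, x * y = 0} = {0}

/-! Two tools drive the proof: a maximum principle for quasinilpotence, and the Riesz idempotents
of an element `a` of finite spectrum, found in the commutative closed subalgebra generated by `a`.

Suppose `p ≠ 0`. If `z` is close to `1`, then `x = (1 - p) * z` is close to `1 - p` and `p * x = 0`,
so `q * x` has a one-point spectrum; being singular, it is quasinilpotent. By the maximum principle
`q * (1 - p) * z` is quasinilpotent for every `z`, so `q * p = q`. Now `x = 1 - p + t • y` with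
small `t ≠ 0` gives `#σ(q * y) = #σ(p * y)` for all `y`. It follows that `q` maps quasinilpotents of
`p * A` to quasinilpotents, and feeding it square-zero elements shows that `f * e = 0` implies
`f * q * e = 0` for `e` in `p * A`; so `q` commutes with the idempotents of `p * A * p`. Counting
spectral points on a Riesz idempotent of `q` gives `q = λ • p + n` with `n` quasinilpotent. If
`n ≠ 0`, some `p * y * n` has a nonzero Riesz idempotent `e`; as `e` commutes with `n`, it makes
`n` left invertible in `e * A * e`, an absurdity. The case `p = 0` reduces to the case `p = 1`. -/

open Filter Polynomial Topology WeakDual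

section Algebraic

variable {A : Type*} [Ring A] [Algebra ℂ A]

/-- An element is quasinilpotent if its spectrum contains no nonzero point. Stated as an inclusion,
so that every element of the zero algebra is quasinilpotent. -/
def IsQuasinilpotent (a : A) : Prop :=
  spectrum ℂ a ⊆ {0}

protected theorem IsQuasinilpotent.mul_comm {a b : A} (h : IsQuasinilpotent (a * b)) :
    IsQuasinilpotent (b * a) := by
  rw [IsQuasinilpotent, ← Set.sdiff_eq_empty] at h ⊢
  rw [spectrum.nonzero_mul_comm, h]

theorem IsQuasinilpotent.isUnit_algebraMap_sub {a : A} (h : IsQuasinilpotent a) {z : ℂ}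
    (hz : z ≠ 0) : IsUnit (algebraMap ℂ A z - a) :=
  spectrum.notMem_iff.1 fun hmem => hz (h hmem)

theorem IsQuasinilpotent.unit_smul {a : A} (h : IsQuasinilpotent a) (z : ℂˣ) :
    IsQuasinilpotent (z • a) := by
  rw [IsQuasinilpotent, spectrum.unit_smul_eq_smul]
  rintro _ ⟨w, hw, rfl⟩
  simp [Set.mem_singleton_iff.1 (h hw)]

theorem isQuasinilpotent_of_isNilpotent {a : A} (h : IsNilpotent a) : IsQuasinilpotent a := by
  intro z hz
  by_contra hz0
  have hunit : IsUnit (algebraMap ℂ A z) := (isUnit_iff_ne_zero.2 hz0).map _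
  refine hz (spectrum.mem_resolventSet_iff.2 ?_)
  rw [sub_eq_add_neg]
  exact h.neg.isUnit_add_left_of_commute hunit (Algebra.commutes z _).symm

theorem IsQuasinilpotent.eq_zero_of_isIdempotentElem {e : A} (h : IsQuasinilpotent e)
    (he : IsIdempotentElem e) : e = 0 := by
  have hunit : IsUnit (1 - e) := by simpa using h.isUnit_algebraMap_sub one_ne_zero
  exact hunit.mul_left_eq_zero.1 he.mul_one_sub_self

theorem JacobsonSemisimple.eq_zero_of_forall_isQuasinilpotent_mul (hss : JacobsonSemisimple A)
    {a : A} (h : ∀ y, IsQuasinilpotent (a * y)) : a = 0 := by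
  suffices a ∈ TwoSidedIdeal.jacobson (⊥ : TwoSidedIdeal A) by rwa [hss] at this
  refine TwoSidedIdeal.mem_jacobson_iff.2 fun y => ?_
  obtain ⟨u, hu⟩ := (h y).mul_comm.isUnit_algebraMap_sub (z := -1) (by norm_num)
  have hinv : (↑u⁻¹ : A) * (-1 - y * a) = 1 := by simp [hu]
  refine ⟨-↑u⁻¹, ?_⟩
  have hzero : -(↑u⁻¹ : A) * y * a + -↑u⁻¹ - 1 = 0 := by
    rw [← hinv]
    noncomm_ring
  rw [hzero]
  exact zero_mem _

theorem exists_isQuasinilpotent_sub_smul_one {a : A} (h : (spectrum ℂ a).encard = 1) :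
    ∃ z : ℂ, IsQuasinilpotent (a - z • 1) := by
  obtain ⟨z, hz⟩ := Set.encard_eq_one.1 h
  refine ⟨z, ?_⟩
  rw [IsQuasinilpotent, ← Algebra.algebraMap_eq_smul_one, ← spectrum.sub_singleton_eq, hz]
  simp

/-- `e` is a Riesz idempotent of `a` at the spectral value `μ ≠ 0`: it splits off the part of `a`
whose spectrum is `{μ}`. That `a` is invertible in `e * A * e` is encoded by a `v` with
`a * v = v * a = e`. -/
structure IsRieszIdempotent (a : A) (μ : ℂ) (e : A) : Prop where
  isIdempotentElem : IsIdempotentElem e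
  exists_mul_eq : ∃ v, a * v = e ∧ v * a = e
  isQuasinilpotent_sub_mul : IsQuasinilpotent ((a - algebraMap ℂ A μ) * e)
  spectrum_mul_one_sub_subset : spectrum ℂ (a * (1 - e)) ⊆ insert 0 (spectrum ℂ a \ {μ})

theorem IsRieszIdempotent.map {B : Type*} [Ring B] [Algebra ℂ B] {a e : A} {μ : ℂ}
    (h : IsRieszIdempotent a μ e) (φ : A →ₐ[ℂ] B) (hφ : spectrum ℂ (φ a) = spectrum ℂ a) :
    IsRieszIdempotent (φ a) μ (φ e) where
  isIdempotentElem := h.isIdempotentElem.map φ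
  exists_mul_eq := by
    obtain ⟨v, hav, hva⟩ := h.exists_mul_eq
    exact ⟨φ v, by rw [← map_mul, hav], by rw [← map_mul, hva]⟩
  isQuasinilpotent_sub_mul := by
    rw [← AlgHom.commutes φ, ← map_sub, ← map_mul]
    exact (AlgHom.spectrum_apply_subset φ _).trans h.isQuasinilpotent_sub_mul
  spectrum_mul_one_sub_subset := by
    rw [hφ, ← map_one φ, ← map_sub, ← map_mul]
    exact (AlgHom.spectrum_apply_subset φ _).trans h.spectrum_mul_one_sub_subset

theorem encard_spectrum_unit_smul (z : ℂˣ) (a : A) :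
    (spectrum ℂ (z • a)).encard = (spectrum ℂ a).encard := by
  rw [spectrum.unit_smul_eq_smul, Set.encard_smul_set]

end Algebraic

section Banach

variable {A : Type*} [NormedRing A] [NormedAlgebra ℂ A] [CompleteSpace A]

theorem isQuasinilpotent_iff_encard_spectrum_eq_one [Nontrivial A] {a : A} :
    IsQuasinilpotent a ↔ (spectrum ℂ a).encard = 1 ∧ ¬ IsUnit a := by
  rw [← spectrum.zero_mem_iff ℂ, Set.encard_eq_one]
  constructor
  · intro h
    have hspec := (spectrum.nonempty a).subset_singleton_iff.1 h
    exact ⟨⟨0, hspec⟩, by simp [hspec]⟩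
  · rintro ⟨⟨z, hz⟩, h0⟩
    rw [hz] at h0
    rw [IsQuasinilpotent, hz, Set.singleton_subset_singleton]
    simpa using h0.symm

theorem IsQuasinilpotent.encard_spectrum [Nontrivial A] {a : A} (h : IsQuasinilpotent a) :
    (spectrum ℂ a).encard = 1 :=
  (isQuasinilpotent_iff_encard_spectrum_eq_one.1 h).1

theorem IsQuasinilpotent.eventually_norm_pow_le {a : A} (h : IsQuasinilpotent a) {ε : ℝ}
    (hε : 0 < ε) : ∀ᶠ m : ℕ in atTop, ‖a ^ m‖ ≤ ε ^ m := by
  have hradius : spectralRadius ℂ a = 0 := by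
    simp only [spectralRadius, ENNReal.iSup_eq_zero]
    intro z hz
    simpa using h hz
  have hgelfand := spectrum.pow_norm_pow_one_div_tendsto_nhds_spectralRadius a
  rw [hradius] at hgelfand
  filter_upwards [hgelfand.eventually_lt_const (ENNReal.ofReal_pos.2 hε),
    eventually_ne_atTop 0] with m hm hm0
  rw [ENNReal.ofReal_lt_ofReal_iff hε] at hm
  calc ‖a ^ m‖ = (‖a ^ m‖ ^ (1 / m : ℝ)) ^ m := by
        rw [one_div, Real.rpow_inv_natCast_pow (norm_nonneg _) hm0]
    _ ≤ ε ^ m := by gcongr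

theorem IsQuasinilpotent.summable_norm_pow_mul_pow {a : A} (h : IsQuasinilpotent a) {r : ℝ}
    (hr : 0 < r) : Summable fun m => ‖a ^ m‖ * r ^ m := by
  refine Summable.of_norm_bounded_eventually_nat summable_geometric_two ?_
  filter_upwards [h.eventually_norm_pow_le (ε := 1 / 2 / r) (by positivity)] with m hm
  rw [Real.norm_of_nonneg (by positivity)]
  calc ‖a ^ m‖ * r ^ m ≤ (1 / 2 / r) ^ m * r ^ m := by gcongr
    _ = (1 / 2) ^ m := by rw [← mul_pow, div_mul_cancel₀ _ hr.ne']

theorem IsQuasinilpotent.eq_zero_of_mul_eq {n w e : A} (h : IsQuasinilpotent n)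
    (hwn : w * n = e) (hwe : w * e = w) : e = 0 := by
  have hpow : ∀ m : ℕ, w ^ (m + 1) * n ^ (m + 1) = e := by
    intro m
    induction m with
    | zero => simpa using hwn
    | succ m ih =>
      calc w ^ (m + 2) * n ^ (m + 2) = w ^ m * (w * (w * n)) * n ^ (m + 1) := by
            simp only [pow_succ w, pow_succ' n, mul_assoc]
        _ = e := by rw [hwn, hwe, ← pow_succ, ih]
  have hsum := h.summable_norm_pow_mul_pow (r := ‖w‖ + 1) (by positivity)
  refine norm_le_zero_iff.1 (ge_of_tendsto' ((tendsto_add_atTop_iff_nat 1).2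
    hsum.tendsto_atTop_zero) fun m => ?_)
  calc ‖e‖ ≤ ‖w ^ (m + 1)‖ * ‖n ^ (m + 1)‖ := hpow m ▸ norm_mul_le _ _
    _ ≤ (‖w‖ + 1) ^ (m + 1) * ‖n ^ (m + 1)‖ := by
        gcongr
        exact (norm_pow_le' w m.succ_pos).trans (by gcongr; linarith)
    _ = _ := by ring

theorem IsQuasinilpotent.mul_ne_one [Nontrivial A] {n : A} (h : IsQuasinilpotent n) (w : A) :
    w * n ≠ 1 :=
  fun hwn => one_ne_zero (h.eq_zero_of_mul_eq hwn (mul_one w))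

section MaximumPrinciple

theorem norm_pow_mul_le_pow_mul {R : Type*} [SeminormedRing R] [NormOneClass R] {a : R}
    {ε : ℝ} {m : ℕ} (h : ‖a ^ m‖ ≤ ε ^ m) (k : ℕ) :
    ‖a ^ (m * k)‖ ≤ ε ^ (m * k) := by
  rw [pow_mul, pow_mul]
  exact (norm_pow_le _ _).trans (by gcongr)

variable [NormOneClass A]

theorem isQuasinilpotent_of_forall_exists_norm_pow_le {a : A}
    (h : ∀ ε : ℝ, 0 < ε → ∃ m : ℕ, m ≠ 0 ∧ ‖a ^ m‖ ≤ ε ^ m) : IsQuasinilpotent a := by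
  intro z hz
  by_contra hz0
  have hz_pos : 0 < ‖z‖ := norm_pos_iff.2 hz0
  obtain ⟨m, hm0, hm⟩ := h (‖z‖ / 2) (by positivity)
  have hle : ‖z‖ ^ m ≤ (‖z‖ / 2) ^ m := by
    rw [← norm_pow]
    exact (spectrum.norm_le_norm_of_mem (spectrum.pow_mem_pow a m hz)).trans hm
  exact (pow_lt_pow_left₀ (half_lt_self hz_pos) (by positivity) hm0).not_ge hle

theorem exists_forall_norm_pow_le_of_isCompact {X : Type*} [TopologicalSpace X] {K : Set X}
    (hK : IsCompact K) {f : X → A} (hf : ContinuousOn f K)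
    (hqn : ∀ x ∈ K, IsQuasinilpotent (f x)) {ε : ℝ} (hε : 0 < ε) :
    ∃ m : ℕ, m ≠ 0 ∧ ∀ x ∈ K, ‖f x ^ m‖ ≤ ε ^ m := by
  refine hK.induction_on (p := fun T => ∃ m : ℕ, m ≠ 0 ∧ ∀ x ∈ T, ‖f x ^ m‖ ≤ ε ^ m)
    ⟨1, one_ne_zero, by simp⟩ ?mono ?union ?locally
  case mono =>
    rintro S T hST ⟨m, hm, hT⟩
    exact ⟨m, hm, fun x hx => hT x (hST hx)⟩
  case union =>
    rintro S T ⟨m, hm, hS⟩ ⟨k, hk, hT⟩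
    refine ⟨m * k, mul_ne_zero hm hk, ?_⟩
    rintro x (hx | hx)
    · exact norm_pow_mul_le_pow_mul (hS x hx) k
    · exact mul_comm m k ▸ norm_pow_mul_le_pow_mul (hT x hx) m
  case locally =>
    intro x hx
    obtain ⟨m, hm, hm0⟩ := (((hqn x hx).eventually_norm_pow_le (half_pos hε)).and
      (eventually_ne_atTop 0)).exists
    have hlt : ‖f x ^ m‖ < ε ^ m :=
      hm.trans_lt (pow_lt_pow_left₀ (half_lt_self hε) (by positivity) hm0)
    refine ⟨{y | ‖f y ^ m‖ < ε ^ m}, ?_, m, hm0, fun y hy => le_of_lt hy⟩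
    exact ((hf x hx).pow m).norm.eventually_lt_const hlt

theorem isQuasinilpotent_of_forall_mem_frontier {f : ℂ → A} {U : Set ℂ}
    (hU : Bornology.IsBounded U) (hf : DiffContOnCl ℂ f U)
    (hqn : ∀ z ∈ frontier U, IsQuasinilpotent (f z)) {z : ℂ} (hz : z ∈ closure U) :
    IsQuasinilpotent (f z) := by
  refine isQuasinilpotent_of_forall_exists_norm_pow_le fun ε hε => ?_
  have hcompact : IsCompact (frontier U) :=
    hU.isCompact_closure.of_isClosed_subset isClosed_frontier frontier_subset_closure
  obtain ⟨m, hm0, hm⟩ := exists_forall_norm_pow_le_of_isCompact hcompact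
    (hf.continuousOn.mono frontier_subset_closure) hqn hε
  have hpow : DiffContOnCl ℂ (fun w => f w ^ m) U :=
    ⟨hf.differentiableOn.pow m, hf.continuousOn.pow m⟩
  exact ⟨m, hm0, Complex.norm_le_of_forall_mem_frontier_norm_le hU hpow hm hz⟩

theorem isQuasinilpotent_mul_of_eventually_nhds {a x₀ : A}
    (h : ∀ᶠ x in 𝓝 x₀, IsQuasinilpotent (a * x)) (y : A) : IsQuasinilpotent (a * y) := by
  have hlim : Tendsto (fun s : ℂ => x₀ + s⁻¹ • y) (Bornology.cobounded ℂ) (𝓝 x₀) := by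
    simpa using ((tendsto_inv₀_cobounded (α := ℂ)).smul_const y).const_add x₀
  have hlarge : ∀ᶠ s in Bornology.cobounded ℂ, IsQuasinilpotent (a * (s • x₀ + y)) := by
    filter_upwards [hlim.eventually h, Bornology.eventually_ne_cobounded 0] with s hs hs0
    have hscale : a * (s • x₀ + y) = Units.mk0 s hs0 • (a * (x₀ + s⁻¹ • y)) := by
      rw [Units.smul_def, Units.val_mk0, ← mul_smul_comm, smul_add, smul_inv_smul₀ hs0]
    exact hscale ▸ hs.unit_smul _
  obtain ⟨R, -, hR⟩ := hasBasis_cobounded_norm.eventually_iff.1 hlarge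
  have hr : 0 < max R 1 := by positivity
  have hdiff : Differentiable ℂ fun s : ℂ => a * (s • x₀ + y) := by fun_prop
  have hzero := isQuasinilpotent_of_forall_mem_frontier
    (Metric.isBounded_ball (x := (0 : ℂ)) (r := max R 1)) hdiff.diffContOnCl
    (fun s hs => hR ?_) (subset_closure (Metric.mem_ball_self hr))
  · simpa using hzero
  · rw [frontier_ball _ hr.ne', mem_sphere_zero_iff_norm] at hs
    exact (le_max_left R 1).trans_eq hs.symm

end MaximumPrinciple

section RieszIdempotent

theorem IsQuasinilpotent.exists_eq_one_add_mul_mul_self {g : A} (h : IsQuasinilpotent g) :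
    ∃ c : A, c = 1 + g * (c * c) := by
  have hle : ∀ n, ‖catalan n • g ^ n‖ ≤ ‖g ^ n‖ * 4 ^ n := fun n => by
    have hcatalan : catalan n ≤ 4 ^ n := by
      rw [catalan_eq_centralBinom_div]
      exact (Nat.div_le_self _ _).trans (Nat.centralBinom_le_four_pow n)
    refine norm_nsmul_le.trans ?_
    rw [mul_comm]
    gcongr
    exact_mod_cast hcatalan
  have hsum : Summable fun n => ‖catalan n • g ^ n‖ :=
    (h.summable_norm_pow_mul_pow four_pos).of_nonneg_of_le (fun _ => norm_nonneg _) hle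
  refine ⟨∑' n, catalan n • g ^ n, ?_⟩
  rw [tsum_mul_tsum_eq_tsum_sum_antidiagonal_of_summable_norm hsum hsum,
    ← (summable_norm_sum_mul_antidiagonal_of_summable_norm hsum hsum).of_norm.tsum_mul_left,
    hsum.of_norm.tsum_eq_zero_add]
  congr 1
  · simp
  · refine tsum_congr fun n => ?_
    rw [catalan_succ', Finset.sum_smul, Finset.mul_sum]
    refine Finset.sum_congr rfl fun ij hij => ?_
    rw [smul_mul_smul_comm, ← pow_add, Finset.HasAntidiagonal.mem_antidiagonal.1 hij,
      mul_smul_comm, ← pow_succ']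

section Commutative

variable {B : Type*} [NormedCommRing B] [NormedAlgebra ℂ B] [CompleteSpace B]

theorem isQuasinilpotent_iff_forall_characterSpace {b : B} :
    IsQuasinilpotent b ↔ ∀ χ : characterSpace ℂ B, χ b = 0 := by
  simp only [IsQuasinilpotent, Set.subset_def, CharacterSpace.mem_spectrum_iff_exists,
    Set.mem_singleton_iff, forall_exists_index, forall_apply_eq_imp_iff]

theorem exists_isIdempotentElem_add_mul {b : B} (h : IsQuasinilpotent (b * b - b)) :
    ∃ u : B, IsIdempotentElem (b + (b * b - b) * u) := by
  obtain ⟨j, hj⟩ : ∃ j : B, (1 + 4 * (b * b - b)) * j = 1 := by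
    refine (IsUnit.exists_right_inv ?_)
    have h4 : IsUnit (algebraMap ℂ B (-4)) := (isUnit_iff_ne_zero.2 (by norm_num)).map _
    have hfactor : 1 + 4 * (b * b - b) =
        algebraMap ℂ B (-4) * (algebraMap ℂ B (-4)⁻¹ - (b * b - b)) := by
      rw [mul_sub (algebraMap ℂ B (-4)), ← map_mul, mul_inv_cancel₀ (by norm_num), map_one,
        map_neg, map_ofNat, neg_mul, sub_neg_eq_add]
    exact hfactor ▸ h4.mul (h.isUnit_algebraMap_sub (by norm_num))
  have hg : IsQuasinilpotent ((b * b - b) * j) := by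
    rw [isQuasinilpotent_iff_forall_characterSpace] at h ⊢
    intro χ
    rw [map_mul, h χ, zero_mul]
  obtain ⟨c, hc⟩ := hg.exists_eq_one_add_mul_mul_self
  -- `e = b + (1 - 2 * b) * d` is idempotent as soon as `(1 - 2 * b) ^ 2 * (d - d ^ 2) = b ^ 2 - b`;
  -- the solution is `d = g * c`, where `g = (b ^ 2 - b) * (1 - 2 * b) ^ (-2)` and `d = g + d ^ 2`.
  refine ⟨(1 - 2 * b) * (j * c), ?_⟩
  rw [IsIdempotentElem]
  linear_combination -(b * b - b) * hj - (1 + 4 * (b * b - b)) * ((b * b - b) * j) * hc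

theorem exists_isIdempotentElem_forall_characterSpace {b : B} (hfin : (spectrum ℂ b).Finite)
    (μ : ℂ) : ∃ e : B, IsIdempotentElem e ∧
      ∀ χ : characterSpace ℂ B, χ e = if χ b = μ then 1 else 0 := by
  let P := Lagrange.interpolate hfin.toFinset id fun z => if z = μ then 1 else 0
  have hP : ∀ χ : characterSpace ℂ B, χ (aeval b P) = if χ b = μ then 1 else 0 := fun χ => by
    have hmem : χ b ∈ hfin.toFinset :=
      hfin.mem_toFinset.2 (CharacterSpace.mem_spectrum_iff_exists.2 ⟨χ, rfl⟩)
    have heval := Lagrange.eval_interpolate_at_node (fun z : ℂ => if z = μ then (1 : ℂ) else 0)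
      (Set.injOn_id _) hmem
    rw [← Polynomial.aeval_algHom_apply, ← heval]
    rfl
  have hqn : ∀ χ : characterSpace ℂ B, χ (aeval b P * aeval b P - aeval b P) = 0 := fun χ => by
    rw [map_sub, map_mul, hP]
    split_ifs <;> simp
  obtain ⟨u, hu⟩ := exists_isIdempotentElem_add_mul
    (isQuasinilpotent_iff_forall_characterSpace.2 hqn)
  refine ⟨_, hu, fun χ => ?_⟩
  rw [map_add, map_mul, hqn, zero_mul, add_zero, hP]

theorem exists_isRieszIdempotent_of_comm {b : B} (hfin : (spectrum ℂ b).Finite) {μ : ℂ}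
    (hμ : μ ≠ 0) : ∃ e, IsRieszIdempotent b μ e := by
  obtain ⟨e, he, hχ⟩ := exists_isIdempotentElem_forall_characterSpace hfin μ
  have hqn : IsQuasinilpotent ((b - algebraMap ℂ B μ) * e) := by
    refine isQuasinilpotent_iff_forall_characterSpace.2 fun χ => ?_
    rw [map_mul, map_sub, AlgHomClass.commutes, hχ]
    split_ifs with hb <;> simp [hb]
  obtain ⟨w, hw⟩ := (hqn.isUnit_algebraMap_sub (neg_ne_zero.2 hμ)).exists_right_inv
  have hinv : b * (-(e * w)) = e := by
    rw [map_neg] at hw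
    linear_combination e * hw + (b - algebraMap ℂ B μ) * w * he.eq
  refine ⟨e, he, ⟨-(e * w), hinv, mul_comm b _ ▸ hinv⟩, hqn, fun z hz => ?_⟩
  obtain ⟨χ, rfl⟩ := CharacterSpace.mem_spectrum_iff_exists.1 hz
  rw [map_mul, map_sub, map_one, hχ]
  split_ifs with hb
  · simp
  · right
    simpa [hb] using CharacterSpace.apply_mem_spectrum χ b

end Commutative

theorem exists_isRieszIdempotent {a : A} (hfin : (spectrum ℂ a).Finite) {μ : ℂ} (hμ : μ ≠ 0) :
    ∃ e, IsRieszIdempotent a μ e := by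
  let S := Algebra.elemental ℂ a
  let _ : NormedCommRing S := { (inferInstance : NormedRing S) with mul_comm := mul_comm }
  let b : S := ⟨a, Algebra.elemental.self_mem ℂ a⟩
  have hspec : spectrum ℂ b = spectrum ℂ a :=
    Subalgebra.spectrum_eq_of_isPreconnected_compl S b
      (hfin.countable.isConnected_compl_of_one_lt_rank (by simp)).isPreconnected
  obtain ⟨e, he⟩ := exists_isRieszIdempotent_of_comm (hspec ▸ hfin) hμ
  exact ⟨e, he.map S.val hspec.symm⟩

theorem IsQuasinilpotent.eq_zero_of_commute_isIdempotentElem (hss : JacobsonSemisimple A)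
    {n p : A} (hn : IsQuasinilpotent n) (hp : IsIdempotentElem p)
    (hfin : ∀ y, (spectrum ℂ (p * y)).Finite) (hnp : n * p = n)
    (hcomm : ∀ e, IsIdempotentElem e → p * e = e → e * p = e → Commute n e) : n = 0 := by
  refine hss.eq_zero_of_forall_isQuasinilpotent_mul fun y => ?_
  suffices h : IsQuasinilpotent (p * y * n) by simpa [← mul_assoc, hnp] using h.mul_comm
  by_contra hqn
  obtain ⟨z, hz, hz0 : z ≠ 0⟩ := Set.not_subset.1 hqn
  obtain ⟨e, he⟩ := exists_isRieszIdempotent (mul_assoc p y n ▸ hfin (y * n)) hz0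
  obtain ⟨v, hv, hv'⟩ := he.exists_mul_eq
  have hpe : p * e = e := by simp only [← hv, ← mul_assoc, hp.eq]
  have hep : e * p = e := by rw [← hv', mul_assoc, mul_assoc (p * y), hnp]
  have hne := hcomm e he.isIdempotentElem hpe hep
  have hwn : e * v * p * y * e * n = e := by
    calc e * v * p * y * e * n = e * v * p * y * (e * n) := mul_assoc _ _ _
      _ = e * (v * (p * y * n)) * e := by rw [← hne.eq]; noncomm_ring
      _ = e := by rw [hv', he.isIdempotentElem.eq, he.isIdempotentElem.eq]
  have he0 : e = 0 :=
    hn.eq_zero_of_mul_eq hwn (by rw [mul_assoc _ e, he.isIdempotentElem.eq])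
  have hsubset := he.spectrum_mul_one_sub_subset
  rw [he0, sub_zero, mul_one] at hsubset
  simpa [hz0] using hsubset hz

end RieszIdempotent

section EqualCardinality

variable [Nontrivial A] {p q : A}

theorem IsQuasinilpotent.mul_of_encard_spectrum_eq (hqp : q * p = q) {y : A}
    (hcard : (spectrum ℂ (q * y)).encard = (spectrum ℂ (p * y)).encard)
    (h : IsQuasinilpotent (p * y)) : IsQuasinilpotent (q * y) := by
  refine isQuasinilpotent_iff_encard_spectrum_eq_one.2 ⟨hcard.trans h.encard_spectrum, ?_⟩
  rintro ⟨u, hu⟩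
  refine h.mul_ne_one (↑u⁻¹ * q) ?_
  rw [mul_assoc, ← mul_assoc q, hqp, ← hu, Units.inv_mul]

theorem mul_mul_eq_zero_of_forall_encard_spectrum_eq (hss : JacobsonSemisimple A) (hqp : q * p = q)
    (hcard : ∀ y, (spectrum ℂ (q * y)).encard = (spectrum ℂ (p * y)).encard) {e f : A}
    (hpe : p * e = e) (hfe : f * e = 0) : f * q * e = 0 := by
  refine hss.eq_zero_of_forall_isQuasinilpotent_mul fun w => ?_
  have hsq : (p * (e * w * f)) ^ 2 = 0 := by
    calc (p * (e * w * f)) ^ 2 = p * e * w * f * (p * e) * w * f := by noncomm_ring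
      _ = e * w * (f * e) * w * f := by simp only [hpe, mul_assoc]
      _ = 0 := by simp [hfe]
  have hqn := (isQuasinilpotent_of_isNilpotent ⟨2, hsq⟩).mul_of_encard_spectrum_eq hqp (hcard _)
  have hqn' : IsQuasinilpotent (f * (q * e * w)) := .mul_comm (by simpa only [mul_assoc] using hqn)
  simpa only [mul_assoc] using hqn'

theorem mul_eq_self_of_forall_encard_spectrum_eq (hss : JacobsonSemisimple A)
    (hp : IsIdempotentElem p) (hqp : q * p = q)
    (hcard : ∀ y, (spectrum ℂ (q * y)).encard = (spectrum ℂ (p * y)).encard) : p * q = q := by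
  have h := mul_mul_eq_zero_of_forall_encard_spectrum_eq hss hqp hcard hp.eq hp.one_sub_mul_self
  rw [mul_assoc, hqp, sub_mul, one_mul, sub_eq_zero] at h
  exact h.symm

theorem commute_of_forall_encard_spectrum_eq (hss : JacobsonSemisimple A) (hp : IsIdempotentElem p)
    (hqp : q * p = q)
    (hcard : ∀ y, (spectrum ℂ (q * y)).encard = (spectrum ℂ (p * y)).encard) {e : A}
    (he : IsIdempotentElem e) (hpe : p * e = e) (hep : e * p = e) : Commute q e := by
  have hpq := mul_eq_self_of_forall_encard_spectrum_eq hss hp hqp hcard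
  have hqe : q * e = e * q * e := by
    have h := mul_mul_eq_zero_of_forall_encard_spectrum_eq hss hqp hcard (f := p - e) hpe
      (by rw [sub_mul, hpe, he.eq, sub_self])
    rwa [sub_mul, hpq, sub_mul, sub_eq_zero] at h
  have heq : e * q = e * q * e := by
    have h := mul_mul_eq_zero_of_forall_encard_spectrum_eq hss hqp hcard (e := p - e) (f := e)
      (by rw [mul_sub, hp.eq, hpe]) (by rw [mul_sub, hep, he.eq, sub_self])
    rwa [mul_sub, mul_assoc e q p, hqp, sub_eq_zero] at h
  exact hqe.trans heq.symm

theorem isQuasinilpotent_sub_smul_of_spectrum_eq_pair (hp : IsIdempotentElem p) (hp1 : p ≠ 1)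
    (hqp : q * p = q) (hpq : p * q = q)
    (hcard : ∀ y, (spectrum ℂ (q * y)).encard = (spectrum ℂ (p * y)).encard) {z : ℂ} (hz : z ≠ 0)
    (hspec : spectrum ℂ q = {0, z}) : IsQuasinilpotent (q - z • p) := by
  obtain ⟨e, he⟩ := exists_isRieszIdempotent (hspec ▸ Set.toFinite _ : (spectrum ℂ q).Finite) hz
  obtain ⟨v, hqv, hvq⟩ := he.exists_mul_eq
  have hpe : p * e = e := by rw [← hqv, ← mul_assoc, hpq]
  have hep : e * p = e := by rw [← hvq, mul_assoc, hqp]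
  have hf : IsIdempotentElem (p - e) := by
    rw [IsIdempotentElem, sub_mul, mul_sub, mul_sub, hp.eq, hpe, hep, he.isIdempotentElem.eq]
    simp
  have hpf : p * (p - e) = p - e := by rw [mul_sub, hp.eq, hpe]
  have hqf : IsQuasinilpotent (q * (p - e)) := by
    rw [mul_sub, hqp, ← mul_one_sub]
    refine he.spectrum_mul_one_sub_subset.trans ?_
    rw [hspec]
    rintro w (hw | ⟨hw | hw, hwz⟩)
    exacts [hw, hw, (hwz hw).elim]
  have hf_card : (spectrum ℂ (p - e)).encard = 1 := by
    rw [← hpf, ← hcard, hqf.encard_spectrum]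
  have hf_qn : IsQuasinilpotent (p - e) :=
    isQuasinilpotent_iff_encard_spectrum_eq_one.2 ⟨hf_card, fun hu => hp1 (hu.mul_eq_right.1 hpf)⟩
  have hpe_eq : p = e := sub_eq_zero.1 (hf_qn.eq_zero_of_isIdempotentElem hf)
  have hqn := he.isQuasinilpotent_sub_mul
  rwa [← hpe_eq, sub_mul, hqp, ← Algebra.smul_def] at hqn

theorem exists_isQuasinilpotent_sub_smul (hp : IsIdempotentElem p) (hqp : q * p = q)
    (hpq : p * q = q)
    (hcard : ∀ y, (spectrum ℂ (q * y)).encard = (spectrum ℂ (p * y)).encard) :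
    ∃ z : ℂ, IsQuasinilpotent (q - z • p) := by
  have hq_card : (spectrum ℂ q).encard = (spectrum ℂ p).encard := by simpa using hcard 1
  rcases eq_or_ne p 1 with rfl | hp1
  · exact exists_isQuasinilpotent_sub_smul_one (hq_card.trans (by simp))
  by_cases hqn : IsQuasinilpotent q
  · exact ⟨0, by simpa using hqn⟩
  obtain ⟨z, hz, hz0 : z ≠ 0⟩ := Set.not_subset.1 hqn
  have hzero : 0 ∈ spectrum ℂ q :=
    (spectrum.zero_mem_iff ℂ).2 fun hu => hp1 (hu.mul_eq_right.1 hpq)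
  have hle : (spectrum ℂ q).encard ≤ ({0, z} : Set ℂ).encard := by
    calc (spectrum ℂ q).encard ≤ ({0, 1} : Set ℂ).encard :=
          hq_card.trans_le (Set.encard_le_encard (hp.spectrum_subset ℂ))
      _ = ({0, z} : Set ℂ).encard := by
          rw [Set.encard_pair zero_ne_one, Set.encard_pair hz0.symm]
  have hspec : {0, z} = spectrum ℂ q :=
    (Set.toFinite {0, z}).eq_of_subset_of_encard_le (Set.pair_subset hzero hz) hle
  exact ⟨z, isQuasinilpotent_sub_smul_of_spectrum_eq_pair hp hp1 hqp hpq hcard hz0 hspec.symm⟩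

theorem exists_eq_smul_of_forall_encard_spectrum_eq (hss : JacobsonSemisimple A)
    (hp : IsIdempotentElem p) (hqp : q * p = q) (hfin : ∀ y, (spectrum ℂ (p * y)).Finite)
    (hcard : ∀ y, (spectrum ℂ (q * y)).encard = (spectrum ℂ (p * y)).encard) :
    ∃ z : ℂ, q = z • p := by
  have hpq := mul_eq_self_of_forall_encard_spectrum_eq hss hp hqp hcard
  obtain ⟨z, hz⟩ := exists_isQuasinilpotent_sub_smul hp hqp hpq hcard
  refine ⟨z, sub_eq_zero.1 (hz.eq_zero_of_commute_isIdempotentElem hss hp hfin ?_ ?_)⟩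
  · rw [sub_mul, hqp, smul_mul_assoc, hp.eq]
  · intro e he hpe hep
    have hpe_comm : Commute p e := hpe.trans hep.symm
    exact (commute_of_forall_encard_spectrum_eq hss hp hqp hcard he hpe hep).sub_left
      (hpe_comm.smul_left z)

theorem exists_eq_smul_one_of_forall_encard_spectrum_eq_one (hss : JacobsonSemisimple A)
    (h : ∀ y, (spectrum ℂ (q * y)).encard = 1) : ∃ z : ℂ, q = z • (1 : A) := by
  by_cases hqn : ∀ y, IsQuasinilpotent (q * y)
  · exact ⟨0, by rw [hss.eq_zero_of_forall_isQuasinilpotent_mul hqn, zero_smul]⟩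
  obtain ⟨y, hy⟩ := not_forall.1 hqn
  obtain ⟨u, hu⟩ : IsUnit (q * y) := by
    by_contra hunit
    exact hy (isQuasinilpotent_iff_encard_spectrum_eq_one.2 ⟨h y, hunit⟩)
  have hcard : ∀ x : A, (spectrum ℂ x).encard = 1 := fun x => by
    simpa [← mul_assoc, ← hu] using h (y * ↑u⁻¹ * x)
  exact exists_eq_smul_of_forall_encard_spectrum_eq hss .one (mul_one q)
    (fun y => Set.finite_of_encard_eq_coe (hcard _)) fun y => (hcard _).trans (hcard _).symm

end EqualCardinality

end Banach

section Localization

variable {A : Type*} [NormedRing A] [NormedAlgebra ℂ A] {p q : A}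

theorem forall_encard_spectrum_eq_of_eventually_nhds {x₀ : A} (hpx : p * x₀ = 0)
    (hqx : q * x₀ = 0) (h : ∀ᶠ x in 𝓝 x₀, (spectrum ℂ (p * x)).Finite ∧
      (spectrum ℂ (q * x)).encard = (spectrum ℂ (p * x)).encard) (y : A) :
    (spectrum ℂ (p * y)).Finite ∧
      (spectrum ℂ (q * y)).encard = (spectrum ℂ (p * y)).encard := by
  have hlim : Tendsto (fun t : ℂ => x₀ + t • y) (𝓝[≠] 0) (𝓝 x₀) := by
    have hcont : Continuous fun t : ℂ => x₀ + t • y := by fun_prop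
    simpa using (hcont.tendsto 0).mono_left nhdsWithin_le_nhds
  obtain ⟨t, ht, ht0 : t ≠ 0⟩ := ((hlim.eventually h).and self_mem_nhdsWithin).exists
  have hscale : ∀ r : A, r * x₀ = 0 → r * (x₀ + t • y) = Units.mk0 t ht0 • (r * y) :=
    fun r hr => by rw [mul_add, hr, zero_add, mul_smul_comm, Units.smul_mk0]
  simpa only [hscale p hpx, hscale q hqx, ← Set.encard_lt_top_iff, encard_spectrum_unit_smul]
    using ht

variable [CompleteSpace A] [NormOneClass A]

theorem mul_eq_self_of_eventually_nhds_one_sub (hss : JacobsonSemisimple A)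
    (hp : IsIdempotentElem p) (hp0 : p ≠ 0) (h : ∀ᶠ x in 𝓝 (1 - p),
      (spectrum ℂ (q * x)).encard = (spectrum ℂ (p * x)).encard) : q * p = q := by
  have : Nontrivial A := NormOneClass.nontrivial
  have hlim : Tendsto (fun x => (1 - p) * x) (𝓝 1) (𝓝 (1 - p)) := by
    simpa using (continuous_const_mul (1 - p)).tendsto 1
  have hzero : q * (1 - p) = 0 := by
    refine hss.eq_zero_of_forall_isQuasinilpotent_mul
      (isQuasinilpotent_mul_of_eventually_nhds (x₀ := 1) ?_)
    filter_upwards [hlim.eventually h, Units.isOpen.mem_nhds isUnit_one] with x hx hx_unit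
    rw [← mul_assoc, ← mul_assoc, hp.mul_one_sub_self, zero_mul] at hx
    refine isQuasinilpotent_iff_encard_spectrum_eq_one.2 ⟨by simpa using hx, fun hunit => ?_⟩
    obtain ⟨w, hw⟩ := (hx_unit.mul_right_iff.1 hunit).exists_left_inv
    refine hp0 ?_
    calc p = w * (q * (1 - p)) * p := by rw [hw, one_mul]
      _ = 0 := by simp [mul_assoc, hp.one_sub_mul_self]
  rw [mul_sub, mul_one, sub_eq_zero] at hzero
  exact hzero.symm

theorem exists_eq_smul_of_eventually_nhds_one_sub (hss : JacobsonSemisimple A)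
    (hp : IsIdempotentElem p) (hp0 : p ≠ 0) (h : ∀ᶠ x in 𝓝 (1 - p),
      (spectrum ℂ (p * x)).Finite ∧
        (spectrum ℂ (q * x)).encard = (spectrum ℂ (p * x)).encard) :
    ∃ z : ℂ, q = z • p := by
  have : Nontrivial A := NormOneClass.nontrivial
  have hqp := mul_eq_self_of_eventually_nhds_one_sub hss hp hp0 (h.mono fun _ hx => hx.2)
  have hglobal := forall_encard_spectrum_eq_of_eventually_nhds hp.mul_one_sub_self
    (by rw [mul_sub, hqp, mul_one, sub_self]) h
  exact exists_eq_smul_of_forall_encard_spectrum_eq hss hp hqp (fun y => (hglobal y).1)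
    fun y => (hglobal y).2

end Localization

theorem scalar_multiple_of_card_spectrum_eq
    {A : Type*} [NormedRing A] [NormOneClass A] [NormedAlgebra ℂ A] [CompleteSpace A]
    (hss : JacobsonSemisimple A) (p q : A) (hp : p * p = p)
    (h : ∃ Np ∈ nhds p, ∃ Nq ∈ nhds ((1 : A) - p), ∀ x ∈ Np ∪ Nq,
      (spectrum ℂ (p * x)).Finite ∧
        (spectrum ℂ (q * x)).encard = (spectrum ℂ (p * x)).encard) :
    (∃ lam : ℂ, q = lam • p) ∨ (∃ lam : ℂ, q = lam • (1 : A)) := by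
  have : Nontrivial A := NormOneClass.nontrivial
  obtain ⟨Np, hNp, Nq, hNq, h⟩ := h
  rcases eq_or_ne p 0 with rfl | hp0
  · right
    have hglobal := forall_encard_spectrum_eq_of_eventually_nhds (mul_zero 0) (mul_zero q)
      (eventually_of_mem hNp fun x hx => h x (Or.inl hx))
    exact exists_eq_smul_one_of_forall_encard_spectrum_eq_one hss fun y => by
      simpa using (hglobal y).2
  · left
    exact exists_eq_smul_of_eventually_nhds_one_sub hss hp hp0
      (eventually_of_mem hNq fun x hx => h x (Or.inr hx))
end
end

section
/- Let A be a complex semisimple unital Banach algebra and let s ∈ A be such that for every x ∈ A the spectrum σ(sx) has at most 0 as an accumulation point. Then every Riesz projection of s corresponding to a nonzero spectral value of s has finite rank (i.e. belongs to Soc A). -/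
open Complex

noncomputable section

/-! Let `p` be the Riesz projection of `s` at `c ≠ 0`. By the holomorphic functional calculus `p` is
an idempotent of the form `s * y`, so every `b ∈ pAp` equals `s * (y * b)` and `σ(b)` can accumulate
only at `0`. The same holds for `b + p`, whose spectrum in `pAp` is that of `b` translated by `1`;
hence every element of the corner `pAp` has finite spectrum. A semisimple Banach algebra with this
property is finite-dimensional (Kaplansky): idempotents satisfy the descending chain condition, so
`1` is a sum of minimal idempotents `e`, and each `eAf` has dimension at most one. Finally
`σ'(xp) = σ'(pxp)`, computed in `pAp`, has at most `dim pAp` points. -/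

section Ring

variable {R : Type*} [Ring R]

theorem isUnit_one_add_mul_swap {x y : R} : IsUnit (1 + x * y) ↔ IsUnit (1 + y * x) := by
  simpa [spectrum.mem_iff, sub_eq_add_neg, neg_mul, mul_neg] using
    not_congr (spectrum.unit_mem_mul_comm (R := ℤ) (a := -x) (b := y) (r := 1))

theorem jacobsonSemisimple_iff :
    JacobsonSemisimple R ↔ ∀ b : R, (∀ a, IsUnit (1 + a * b)) → b = 0 := by
  have mem_jacobson_bot (b : R) :
      b ∈ TwoSidedIdeal.jacobson (⊥ : TwoSidedIdeal R) ↔ ∀ a, ∃ z, z * (1 + a * b) = 1 := by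
    simp only [TwoSidedIdeal.mem_jacobson_iff, TwoSidedIdeal.mem_bot, sub_eq_zero, mul_add,
      mul_one, mul_assoc, add_comm]
  have isUnit_iff (b : R) :
      (∀ a, ∃ z, z * (1 + a * b) = 1) ↔ ∀ a, IsUnit (1 + a * b) := by
    refine ⟨fun h a ↦ ?_, fun h a ↦ (h a).exists_left_inv⟩
    obtain ⟨z, hz⟩ := h a
    -- `z = 1 - z * a * b` is again of the given form, so it has a left inverse as well.
    obtain ⟨w, hw⟩ := h (-(z * a))
    have hz' : 1 + -(z * a) * b = z := by
      rw [neg_mul, mul_assoc, ← sub_eq_add_neg, ← hz, mul_add, mul_one, add_sub_cancel_right]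
    rw [hz'] at hw
    have hw' : w = 1 + a * b := left_inv_eq_right_inv hw hz
    exact ⟨⟨1 + a * b, z, hw' ▸ hw, hz⟩, rfl⟩
  simp only [JacobsonSemisimple, ← isUnit_iff, ← mem_jacobson_bot]
  exact ⟨fun h b hb ↦ by simpa [h] using hb,
    fun h ↦ (TwoSidedIdeal.ext fun b ↦ ⟨fun hb ↦ by simpa using h b hb,
      fun hb ↦ (bot_le : ⊥ ≤ TwoSidedIdeal.jacobson (⊥ : TwoSidedIdeal R)) hb⟩)⟩

theorem JacobsonSemisimple.exists_mul_mul_ne_zero (hR : JacobsonSemisimple R)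
    {u : R} (hu : u ≠ 0) : ∃ v, u * v * u ≠ 0 := by
  by_contra! h
  refine hu (jacobsonSemisimple_iff.1 hR u fun a ↦ IsNilpotent.isUnit_one_add ⟨2, ?_⟩)
  rw [sq, mul_assoc, ← mul_assoc u, h, mul_zero]

end Ring

section Corner

variable {R : Type*} [Ring R] {p : R} (hp : IsIdempotentElem p)

theorem isQuasiregular_coe_corner_iff (c : hp.Corner) :
    IsQuasiregular c.val ↔ IsQuasiregular c := by
  simp only [isQuasiregular_iff]
  obtain ⟨hpc, hcp⟩ := (Subsemigroup.mem_corner_iff hp).1 c.2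
  constructor
  · rintro ⟨y, hy, hy'⟩
    have hy_right : y = -(c.val + c.val * y) :=
      eq_neg_of_add_eq_zero_left (by rwa [add_assoc] at hy)
    have hy_left : y = -(c.val + y * c.val) :=
      eq_neg_of_add_eq_zero_right (by rwa [add_right_comm] at hy')
    have hy_mem : y ∈ Subsemigroup.corner p := by
      refine (Subsemigroup.mem_corner_iff hp).2 ⟨?_, ?_⟩
      · rw [hy_right, mul_neg, mul_add, ← mul_assoc, hpc]
      · rw [hy_left, neg_mul, add_mul, mul_assoc, hcp]
    exact ⟨⟨y, hy_mem⟩, Subtype.ext hy, Subtype.ext hy'⟩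
  · rintro ⟨y, hy, hy'⟩
    exact ⟨y.val, congrArg Subtype.val hy, congrArg Subtype.val hy'⟩

theorem JacobsonSemisimple.corner (hR : JacobsonSemisimple R) : JacobsonSemisimple hp.Corner := by
  refine jacobsonSemisimple_iff.2 fun b hb ↦ Subtype.ext (jacobsonSemisimple_iff.1 hR _ fun a ↦ ?_)
  obtain ⟨hpb, hbp⟩ := (Subsemigroup.mem_corner_iff hp).1 b.2
  have compressed : IsUnit (1 + p * a * p * b.val) := by
    rw [← isQuasiregular_iff_isUnit]
    exact (isQuasiregular_coe_corner_iff hp (⟨p * a * p, a, rfl⟩ * b)).2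
      (isQuasiregular_iff_isUnit.2 (hb _))
  rwa [mul_assoc (p * a), hpb, mul_assoc, isUnit_one_add_mul_swap, mul_assoc, hbp] at compressed

instance {k : Type*} [CommSemiring k] [Algebra k R] : Module k hp.Corner where
  smul t c := ⟨t • c.val, (Subsemigroup.mem_corner_iff hp).2
    (by simp only [mul_smul_comm, smul_mul_assoc, (Subsemigroup.mem_corner_iff hp).1 c.2,
      and_self])⟩
  one_smul _ := Subtype.ext (one_smul k _)
  mul_smul _ _ _ := Subtype.ext (mul_smul _ _ _)
  smul_zero _ := Subtype.ext (smul_zero _)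
  smul_add _ _ _ := Subtype.ext (smul_add _ _ _)
  add_smul _ _ _ := Subtype.ext (add_smul _ _ _)
  zero_smul _ := Subtype.ext (zero_smul k _)

instance {k : Type*} [CommSemiring k] [Algebra k R] : Algebra k hp.Corner :=
  Algebra.ofModule (fun _ _ _ ↦ Subtype.ext (smul_mul_assoc _ _ _))
    (fun _ _ _ ↦ Subtype.ext (mul_smul_comm _ _ _))

theorem quasispectrum_coe_corner (k : Type*) [CommSemiring k] [Algebra k R] (c : hp.Corner) :
    quasispectrum k c.val = quasispectrum k c := by
  ext t
  exact forall_congr' fun ht ↦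
    not_congr (isQuasiregular_coe_corner_iff hp (-(ht.unit⁻¹ • c)))

end Corner

theorem nzSpec_eq_quasispectrum_diff {A : Type*} [Ring A] [Algebra ℂ A] (a : A) :
    nzSpec a = quasispectrum ℂ a \ {0} := by
  rw [nzSpec, quasispectrum_eq_spectrum_union_zero, Set.union_sdiff_right]

theorem nzSpec_coe_corner {A : Type*} [Ring A] [Algebra ℂ A] {p : A} (hp : IsIdempotentElem p)
    (c : hp.Corner) : nzSpec c.val = nzSpec c := by
  simp only [nzSpec_eq_quasispectrum_diff, quasispectrum_coe_corner]

section NormedCorner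

variable {A : Type*} [NormedRing A] {p : A} (hp : IsIdempotentElem p)

instance : NormedRing hp.Corner :=
  NormedRing.induced hp.Corner A (NonUnitalSubringClass.subtype (NonUnitalRing.corner p))
    Subtype.val_injective

instance [NormedAlgebra ℂ A] : NormedAlgebra ℂ hp.Corner where
  norm_smul_le t c := norm_smul_le t c.val

instance [CompleteSpace A] : CompleteSpace hp.Corner := by
  have isClosed_corner : IsClosed {x : A | p * x = x ∧ x * p = x} :=
    (isClosed_eq (continuous_const_mul p) continuous_id).inter
      (isClosed_eq (continuous_mul_const p) continuous_id)
  have corner_eq : (Subsemigroup.corner p : Set A) = {x | p * x = x ∧ x * p = x} :=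
    Set.ext fun _ ↦ Subsemigroup.mem_corner_iff hp
  exact (corner_eq ▸ isClosed_corner).isComplete.completeSpace_coe

end NormedCorner

section RieszProjection

open Metric

theorem circleIntegral_map {E F : Type*} [NormedAddCommGroup E] [NormedSpace ℂ E]
    [CompleteSpace E] [NormedAddCommGroup F] [NormedSpace ℂ F] [CompleteSpace F] (L : E →L[ℂ] F)
    {f : ℂ → E} {c : ℂ} {r : ℝ} (hf : CircleIntegrable f c r) :
    (∮ z in C(c, r), L (f z)) = L (∮ z in C(c, r), f z) := by
  simpa only [circleIntegral, map_smul] using L.intervalIntegral_comp_comm hf.out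

theorem commute_resolvent {k B : Type*} [CommSemiring k] [Ring B] [Algebra k B] (a : B) (z : k) :
    Commute a (resolvent a z) := by
  have commute : Commute a (algebraMap k B z - a) :=
    (Algebra.commute_algebraMap_right z a).sub_right (Commute.refl a)
  by_cases hz : z ∈ resolventSet k a
  · rw [spectrum.resolvent_eq hz]
    exact Commute.units_inv_right (hz.unit_spec.symm ▸ commute)
  · rw [resolvent, Ring.inverse_non_unit _ hz]
    exact Commute.zero_right a

theorem algebraMap_sub_mul_resolvent {k B : Type*} [CommRing k] [Ring B] [Algebra k B] {a : B}
    {z : k} (hz : z ∈ resolventSet k a) (w : k) :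
    (algebraMap k B w - a) * resolvent a z = 1 - (z - w) • resolvent a z := by
  have cancel : (algebraMap k B z - a) * resolvent a z = 1 := Ring.mul_inverse_cancel _ hz
  rw [← cancel, Algebra.smul_def, ← sub_mul, map_sub]
  congr 1
  abel

variable {A : Type*} [NormedRing A] [NormedAlgebra ℂ A]

/-- The Riesz projection of `a` for the part of `σ(a)` inside the circle `|z - c| = r`. It is
meaningful only when this circle does not meet `σ(a)`. -/
def rieszProjection (a : A) (c : ℂ) (r : ℝ) : A :=
  (2 * Real.pi * I : ℂ)⁻¹ • ∮ z in C(c, r), resolvent a z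

/-- The Cauchy transform `w ↦ (2πi)⁻¹ ∮ (z - w)⁻¹ (z - a)⁻¹ dz` of the resolvent of `a` over the
circle `|z - c| = r`: up to the Riesz projection, an inverse of `w - a`. -/
def resolventCauchyTransform (a : A) (c : ℂ) (r : ℝ) (w : ℂ) : A :=
  (2 * Real.pi * I : ℂ)⁻¹ • ∮ z in C(c, r), (z - w)⁻¹ • resolvent a z

variable {a : A} {c w : ℂ} {r : ℝ}

theorem sphere_subset_resolventSet (hr : 0 < r) (hsep : closedBall c r \ {c} ⊆ resolventSet ℂ a) :
    sphere c r ⊆ resolventSet ℂ a := fun _ hz ↦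
  hsep ⟨sphere_subset_closedBall hz, ne_of_mem_sphere hz hr.ne'⟩

variable [CompleteSpace A]

theorem commute_circleIntegral_right {f : ℂ → A}
    (hf : CircleIntegrable f c r) (h : ∀ z, Commute a (f z)) :
    Commute a (∮ z in C(c, r), f z) := by
  have mul_left := circleIntegral_map (ContinuousLinearMap.mul ℂ A a) hf
  have mul_right := circleIntegral_map ((ContinuousLinearMap.mul ℂ A).flip a) hf
  simp only [ContinuousLinearMap.mul_apply', ContinuousLinearMap.flip_apply] at mul_left mul_right
  rw [Commute, SemiconjBy, ← mul_left, ← mul_right]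
  simp only [(h _).eq]

theorem continuousOn_resolvent (a : A) : ContinuousOn (resolvent a) (resolventSet ℂ a) :=
  fun _ hz ↦ (spectrum.hasDerivAt_resolvent_const_left hz).continuousAt.continuousWithinAt

theorem circleIntegrable_resolvent (hr : 0 ≤ r) (h : sphere c r ⊆ resolventSet ℂ a) :
    CircleIntegrable (resolvent a) c r :=
  ((continuousOn_resolvent a).mono h).circleIntegrable hr

theorem sub_ne_zero_of_notMem_sphere (hw : w ∉ sphere c r) :
    ∀ z ∈ sphere c r, z - w ≠ 0 :=
  fun _ hz h ↦ hw (sub_eq_zero.1 h ▸ hz)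

theorem continuousOn_inv_sub_sphere (hw : w ∉ sphere c r) :
    ContinuousOn (fun z ↦ (z - w)⁻¹) (sphere c r) :=
  (continuousOn_id.sub continuousOn_const).inv₀ (sub_ne_zero_of_notMem_sphere hw)

theorem circleIntegrable_inv_sub_smul_resolvent (hr : 0 ≤ r) (h : sphere c r ⊆ resolventSet ℂ a)
    (hw : w ∉ sphere c r) : CircleIntegrable (fun z ↦ (z - w)⁻¹ • resolvent a z) c r :=
  ((continuousOn_inv_sub_sphere hw).smul ((continuousOn_resolvent a).mono h)).circleIntegrable hr

theorem commute_rieszProjection (hr : 0 ≤ r) (h : sphere c r ⊆ resolventSet ℂ a) :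
    Commute a (rieszProjection a c r) :=
  (commute_circleIntegral_right (circleIntegrable_resolvent hr h)
    (commute_resolvent a)).smul_right _

theorem commute_resolventCauchyTransform (hr : 0 ≤ r) (h : sphere c r ⊆ resolventSet ℂ a)
    (hw : w ∉ sphere c r) : Commute a (resolventCauchyTransform a c r w) :=
  (commute_circleIntegral_right (circleIntegrable_inv_sub_smul_resolvent hr h hw)
    fun z ↦ (commute_resolvent a z).smul_right _).smul_right _

theorem algebraMap_sub_mul_resolventCauchyTransform (hr : 0 ≤ r)
    (h : sphere c r ⊆ resolventSet ℂ a) (hw : w ∉ sphere c r) :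
    (algebraMap ℂ A w - a) * resolventCauchyTransform a c r w =
      ((2 * Real.pi * I : ℂ)⁻¹ * ∮ z in C(c, r), (z - w)⁻¹) • (1 : A) -
        rieszProjection a c r := by
  have integrable_kernel : CircleIntegrable (fun z ↦ (z - w)⁻¹ • (1 : A)) c r :=
    ((continuousOn_inv_sub_sphere hw).smul continuousOn_const).circleIntegrable hr
  have mul_integral := circleIntegral_map (ContinuousLinearMap.mul ℂ A (algebraMap ℂ A w - a))
    (circleIntegrable_inv_sub_smul_resolvent hr h hw)
  simp only [ContinuousLinearMap.mul_apply'] at mul_integral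
  have integrand : Set.EqOn
      (fun z ↦ (algebraMap ℂ A w - a) * ((z - w)⁻¹ • resolvent a z))
      (fun z ↦ (z - w)⁻¹ • (1 : A) - resolvent a z) (sphere c r) := fun z hz ↦ by
    simp only [mul_smul_comm, algebraMap_sub_mul_resolvent (h hz), smul_sub,
      inv_smul_smul₀ (sub_ne_zero_of_notMem_sphere hw z hz)]
  rw [resolventCauchyTransform, rieszProjection, mul_smul_comm, ← mul_integral,
    circleIntegral.integral_congr hr integrand,
    circleIntegral.integral_sub integrable_kernel (circleIntegrable_resolvent hr h),
    circleIntegral.integral_smul_const, smul_sub, smul_smul]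

theorem algebraMap_sub_mul_resolventCauchyTransform_of_mem_ball
    (h : sphere c r ⊆ resolventSet ℂ a) (hw : w ∈ ball c r) :
    (algebraMap ℂ A w - a) * resolventCauchyTransform a c r w = 1 - rieszProjection a c r := by
  rw [algebraMap_sub_mul_resolventCauchyTransform (pos_of_mem_ball hw).le h
    (ne_of_lt hw), circleIntegral.integral_sub_inv_of_mem_ball hw,
    inv_mul_cancel₀ two_pi_I_ne_zero, one_smul]

theorem algebraMap_sub_mul_resolventCauchyTransform_of_notMem_closedBall (hr : 0 ≤ r)
    (h : sphere c r ⊆ resolventSet ℂ a) (hw : w ∉ closedBall c r) :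
    (algebraMap ℂ A w - a) * resolventCauchyTransform a c r w = -rieszProjection a c r := by
  have diffContOnCl : DiffContOnCl ℂ (fun z ↦ (z - w)⁻¹) (ball c r) :=
    (differentiableOn_id.sub_const w).inv
      (fun z hz ↦ sub_ne_zero.2 (ne_of_mem_of_not_mem hz hw)) |>.diffContOnCl_ball subset_rfl
  rw [algebraMap_sub_mul_resolventCauchyTransform hr h (mt (sphere_subset_closedBall ·) hw),
    diffContOnCl.circleIntegral_eq_zero hr, mul_zero, zero_smul, zero_sub]

theorem ball_subset_resolventSet_of_rieszProjection_eq_zero (h : sphere c r ⊆ resolventSet ℂ a)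
    (hP : rieszProjection a c r = 0) : ball c r ⊆ resolventSet ℂ a := fun w hw ↦ by
  have mul_eq_one := algebraMap_sub_mul_resolventCauchyTransform_of_mem_ball h hw
  have commute := (Algebra.commute_algebraMap_left w (resolventCauchyTransform a c r w)).sub_left
    (commute_resolventCauchyTransform (pos_of_mem_ball hw).le h (ne_of_lt hw))
  rw [hP, sub_zero] at mul_eq_one
  exact ⟨⟨_, _, mul_eq_one, commute.eq ▸ mul_eq_one⟩, rfl⟩

/- For `a` not invertible, `0` lies outside the circle, and the Cauchy transform at `0` is
the cofactor. -/
theorem exists_commute_rieszProjection_eq_mul (hr : 0 < r) (hc : c ≠ 0)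
    (hsep : closedBall c r \ {c} ⊆ resolventSet ℂ a) :
    ∃ y, Commute a y ∧ rieszProjection a c r = a * y := by
  have hS : sphere c r ⊆ resolventSet ℂ a := sphere_subset_resolventSet hr hsep
  by_cases ha : IsUnit a
  · obtain ⟨u, rfl⟩ := ha
    exact ⟨u.inv * rieszProjection u.val c r,
      ((Commute.refl u.val).units_inv_right).mul_right (commute_rieszProjection hr.le hS),
      (u.mul_inv_cancel_left _).symm⟩
  · have h0 : (0 : ℂ) ∉ closedBall c r := fun h ↦
      spectrum.zero_mem ℂ ha (hsep ⟨h, hc.symm⟩)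
    have h0' := mt (sphere_subset_closedBall ·) h0
    refine ⟨resolventCauchyTransform a c r 0, commute_resolventCauchyTransform hr.le hS h0', ?_⟩
    have := algebraMap_sub_mul_resolventCauchyTransform_of_notMem_closedBall hr.le hS h0
    simpa using this.symm

theorem resolventCauchyTransform_eq_resolvent_mul (h : sphere c r ⊆ resolventSet ℂ a)
    (hw : w ∈ ball c r) (hw' : w ∈ resolventSet ℂ a) :
    resolventCauchyTransform a c r w = resolvent a w * (1 - rieszProjection a c r) := by
  rw [← algebraMap_sub_mul_resolventCauchyTransform_of_mem_ball h hw, ← mul_assoc, resolvent,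
    Ring.inverse_mul_cancel _ hw', one_mul]

theorem differentiableOn_resolventCauchyTransform (h : sphere c r ⊆ resolventSet ℂ a) :
    DifferentiableOn ℂ (resolventCauchyTransform a c r) (ball c r) := by
  rcases le_or_gt r 0 with hr | hr
  · rw [ball_eq_empty.2 hr]
    exact differentiableOn_empty
  lift r to NNReal using hr.le
  rw [← Metric.eball_coe]
  exact (hasFPowerSeriesOn_cauchy_integral (circleIntegrable_resolvent hr.le h)
    (by exact_mod_cast hr)).differentiableOn

theorem rieszProjection_eq_of_le {r' : ℝ} (hr' : 0 < r') (hle : r' ≤ r)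
    (hsep : closedBall c r \ {c} ⊆ resolventSet ℂ a) :
    rieszProjection a c r = rieszProjection a c r' := by
  have annulus : closedBall c r \ ball c r' ⊆ resolventSet ℂ a := fun z hz ↦
    hsep ⟨hz.1, fun h ↦ hz.2 (h ▸ mem_ball_self hr')⟩
  rw [rieszProjection, rieszProjection,
    circleIntegral_eq_of_differentiable_on_annulus_off_countable hr' hle Set.countable_empty
      ((continuousOn_resolvent a).mono annulus)]
  rintro z ⟨⟨hz, hz'⟩, -⟩
  exact (spectrum.hasDerivAt_resolvent_const_left (annulus ⟨ball_subset_closedBall hz,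
    mt (ball_subset_closedBall ·) hz'⟩)).differentiableAt

/- On a smaller circle `resolvent a * (1 - P)` is the Cauchy transform, which is holomorphic inside,
so that `P * (1 - P) = 0`. -/
theorem isIdempotentElem_rieszProjection (hr : 0 < r)
    (hsep : closedBall c r \ {c} ⊆ resolventSet ℂ a) :
    IsIdempotentElem (rieszProjection a c r) := by
  have hr₂ : 0 < r / 2 := half_pos hr
  have hlt : r / 2 < r := half_lt_self hr
  have hS : sphere c r ⊆ resolventSet ℂ a := sphere_subset_resolventSet hr hsep
  have hS₂ : sphere c (r / 2) ⊆ resolventSet ℂ a := sphere_subset_resolventSet hr₂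
    ((Set.sdiff_subset_sdiff_left (closedBall_subset_closedBall hlt.le)).trans hsep)
  have integral_eq_zero : ∮ z in C(c, r / 2), resolventCauchyTransform a c r z = 0 :=
    ((differentiableOn_resolventCauchyTransform hS).diffContOnCl_ball
      (closedBall_subset_ball hlt)).circleIntegral_eq_zero hr₂.le
  have integrand : Set.EqOn (resolventCauchyTransform a c r)
      (fun z ↦ resolvent a z * (1 - rieszProjection a c r)) (sphere c (r / 2)) := fun z hz ↦
    resolventCauchyTransform_eq_resolvent_mul hS
      (closedBall_subset_ball hlt (sphere_subset_closedBall hz)) (hS₂ hz)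
  have integral_mul := circleIntegral_map
    ((ContinuousLinearMap.mul ℂ A).flip (1 - rieszProjection a c r))
    (circleIntegrable_resolvent hr₂.le hS₂)
  simp only [ContinuousLinearMap.flip_apply, ContinuousLinearMap.mul_apply'] at integral_mul
  rw [circleIntegral.integral_congr hr₂.le integrand, integral_mul] at integral_eq_zero
  have mul_compl : rieszProjection a c (r / 2) * (1 - rieszProjection a c r) = 0 := by
    rw [rieszProjection, smul_mul_assoc, integral_eq_zero, smul_zero]
  rw [← rieszProjection_eq_of_le hr₂ hlt.le hsep, mul_sub, mul_one, sub_eq_zero] at mul_compl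
  exact mul_compl.symm

end RieszProjection

section TrivialIdempotents

open Metric

theorem exists_closedBall_sdiff_singleton_subset_compl {X : Type*} [MetricSpace X] {S : Set X}
    (hS : S.Finite) (x : X) : ∃ r > 0, closedBall x r \ {x} ⊆ Sᶜ := by
  obtain ⟨r, hr, hrS⟩ := nhds_basis_closedBall.mem_iff.1
    ((hS.subset (Set.sdiff_subset (t := {x}))).isClosed.isOpen_compl.mem_nhds (x := x) (by simp))
  exact ⟨r, hr, fun y hy hyS ↦ hrS hy.1 ⟨hyS, hy.2⟩⟩

/-- Every element of the algebra has finite spectrum. -/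
def HasFiniteSpectra (A : Type*) [Ring A] [Algebra ℂ A] : Prop :=
  ∀ a : A, (spectrum ℂ a).Finite

variable {A : Type*} [NormedRing A] [NormedAlgebra ℂ A] [CompleteSpace A]

theorem isUnit_of_mem_spectrum_of_forall_isIdempotentElem
    (hA : ∀ e : A, IsIdempotentElem e → e = 0 ∨ e = 1) {a : A} (ha : (spectrum ℂ a).Finite) {c : ℂ}
    (hc0 : c ≠ 0) (hc : c ∈ spectrum ℂ a) : IsUnit a := by
  obtain ⟨r, hr, hsep⟩ := exists_closedBall_sdiff_singleton_subset_compl ha c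
  rw [spectrum, compl_compl] at hsep
  have hP0 : rieszProjection a c r ≠ 0 := fun h ↦
    hc (ball_subset_resolventSet_of_rieszProjection_eq_zero (sphere_subset_resolventSet hr hsep) h
      (mem_ball_self hr))
  have hP1 := (hA _ (isIdempotentElem_rieszProjection hr hsep)).resolve_left hP0
  obtain ⟨y, hay, hy⟩ := exists_commute_rieszProjection_eq_mul hr hc0 hsep
  rw [hP1] at hy
  exact ⟨⟨a, y, hy.symm, hay.eq ▸ hy.symm⟩, rfl⟩

theorem eq_zero_of_not_isUnit_of_forall_isIdempotentElem (hss : JacobsonSemisimple A)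
    (hfin : HasFiniteSpectra A) (hA : ∀ e : A, IsIdempotentElem e → e = 0 ∨ e = 1)
    {b : A} (hb : ¬ IsUnit b) : b = 0 := by
  refine jacobsonSemisimple_iff.1 hss b fun a ↦ by_contra fun hab ↦ hb ?_
  have hmem : (-1 : ℂ) ∈ spectrum ℂ (a * b) := by
    rwa [spectrum.mem_iff, map_neg, map_one, ← neg_add', IsUnit.neg_iff]
  obtain ⟨v, hv⟩ := (isUnit_of_mem_spectrum_of_forall_isIdempotentElem hA (hfin (a * b))
    (neg_ne_zero.2 one_ne_zero) hmem).exists_left_inv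
  rw [← mul_assoc] at hv
  have idem : IsIdempotentElem (b * (v * a)) := by
    rw [IsIdempotentElem, mul_assoc, ← mul_assoc (v * a), hv, one_mul]
  rcases hA _ idem with h0 | h1
  · have one_eq_zero : (1 : A) = 0 := by
      calc (1 : A) = v * a * b * (v * a * b) := by rw [hv, one_mul]
        _ = v * a * (b * (v * a)) * b := by simp only [mul_assoc]
        _ = 0 := by rw [h0, mul_zero, zero_mul]
    have := subsingleton_of_zero_eq_one one_eq_zero.symm
    exact isUnit_of_subsingleton b
  · exact ⟨⟨b, v * a, h1, hv⟩, rfl⟩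

theorem exists_eq_algebraMap_of_forall_isIdempotentElem (hss : JacobsonSemisimple A)
    (hfin : HasFiniteSpectra A) (hA : ∀ e : A, IsIdempotentElem e → e = 0 ∨ e = 1)
    (x : A) : ∃ c : ℂ, x = algebraMap ℂ A c := by
  rcases subsingleton_or_nontrivial A with _ | _
  · exact ⟨0, Subsingleton.elim _ _⟩
  · obtain ⟨c, hc⟩ := spectrum.nonempty x
    exact ⟨c, (sub_eq_zero.1
      (eq_zero_of_not_isUnit_of_forall_isIdempotentElem hss hfin hA hc)).symm⟩

end TrivialIdempotents

section MinimalIdempotent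

/-- A minimal idempotent of a `k`-algebra: a nonzero idempotent `e` with `eAe = k e`. -/
structure IsMinimalIdempotent (k : Type*) {B : Type*} [Semiring k] [Ring B] [Module k B]
    (e : B) : Prop where
  isIdempotentElem : IsIdempotentElem e
  ne_zero : e ≠ 0
  exists_eq_smul : ∀ x, ∃ c : k, e * x * e = c • e

theorem IsMinimalIdempotent.hasFiniteRange_mulLeftRight {k B : Type*} [Field k] [Ring B]
    [Algebra k B] (hB : JacobsonSemisimple B) {e f : B} (he : IsMinimalIdempotent k e)
    (hf : IsMinimalIdempotent k f) : (LinearMap.mulLeftRight k (e, f)).HasFiniteRange := by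
  by_cases hzero : LinearMap.mulLeftRight k (e, f) = 0
  · exact hzero ▸ LinearMap.HasFiniteRange.zero
  obtain ⟨x, hx⟩ := DFunLike.ne_iff.1 hzero
  rw [LinearMap.mulLeftRight_apply, LinearMap.zero_apply] at hx
  obtain ⟨u, hu⟩ : ∃ u, u = e * x * f := ⟨_, rfl⟩
  rw [← hu] at hx
  have heu : e * u = u := by rw [hu, mul_assoc, ← mul_assoc, he.isIdempotentElem.eq]
  have huf : u * f = u := by rw [hu, mul_assoc, hf.isIdempotentElem.eq]
  obtain ⟨v, hv⟩ := hB.exists_mul_mul_ne_zero hx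
  obtain ⟨c, hc⟩ := hf.exists_eq_smul (v * u)
  have hfvu : f * v * u = c • f := by
    rw [← hc, ← mul_assoc f, mul_assoc _ u, huf]
  have hc0 : c ≠ 0 := by
    rintro rfl
    refine hv ?_
    calc u * v * u = u * (f * v * u) := by simp only [← mul_assoc, huf]
      _ = 0 := by rw [hfvu, zero_smul, mul_zero]
  have range_le : LinearMap.range (LinearMap.mulLeftRight k (e, f)) ≤ Submodule.span k {u} := by
    rintro _ ⟨w, rfl⟩
    obtain ⟨d, hd⟩ := he.exists_eq_smul (w * f * v)
    have smul_eq : c • (e * w * f) = d • u := by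
      calc c • (e * w * f) = e * w * (f * v * (e * u)) := by rw [heu, hfvu, mul_smul_comm]
        _ = e * (w * f * v) * e * u := by simp only [mul_assoc]
        _ = d • u := by rw [hd, smul_mul_assoc, heu]
    rw [LinearMap.mulLeftRight_apply, Submodule.mem_span_singleton]
    exact ⟨c⁻¹ * d, by rw [mul_smul, ← smul_eq, inv_smul_smul₀ hc0]⟩
  exact Submodule.FG.of_le (Submodule.fg_span_singleton u) range_le

theorem finite_of_one_mem_closure_isMinimalIdempotent {k B : Type*} [Field k] [Ring B]
    [Algebra k B] (hB : JacobsonSemisimple B)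
    (h : (1 : B) ∈ AddSubmonoid.closure {e : B | IsMinimalIdempotent k e}) :
    Module.Finite k B := by
  have add_left (e e' f : B) : LinearMap.mulLeftRight k (e + e', f) =
      LinearMap.mulLeftRight k (e, f) + LinearMap.mulLeftRight k (e', f) := by
    ext; simp [add_mul]
  have add_right (e f f' : B) : LinearMap.mulLeftRight k (e, f + f') =
      LinearMap.mulLeftRight k (e, f) + LinearMap.mulLeftRight k (e, f') := by
    ext; simp [mul_add]
  have zero_left (f : B) : LinearMap.mulLeftRight k (0, f) = 0 := by ext; simp
  have zero_right (e : B) : LinearMap.mulLeftRight k (e, 0) = 0 := by ext; simp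
  have hasFiniteRange : (LinearMap.mulLeftRight k ((1 : B), (1 : B))).HasFiniteRange :=
    AddSubmonoid.closure_induction₂
      (motive := fun e f _ _ ↦ (LinearMap.mulLeftRight k (e, f)).HasFiniteRange)
      (fun _ _ he hf ↦ he.hasFiniteRange_mulLeftRight hB hf)
      (fun f _ ↦ zero_left f ▸ LinearMap.HasFiniteRange.zero)
      (fun e _ ↦ zero_right e ▸ LinearMap.HasFiniteRange.zero)
      (fun _ _ _ _ _ _ h₁ h₂ ↦ add_left _ _ _ ▸ h₁.add h₂)
      (fun _ _ _ _ _ _ h₁ h₂ ↦ add_right _ _ _ ▸ h₁.add h₂) h h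
  have range_eq : LinearMap.range (LinearMap.mulLeftRight k ((1 : B), (1 : B))) = ⊤ :=
    LinearMap.range_eq_top.2 fun x ↦ ⟨x, by simp⟩
  exact ⟨range_eq ▸ hasFiniteRange⟩

end MinimalIdempotent

section FiniteSpectra

theorem mem_spectrum_of_mul_eq_smul {k B : Type*} [CommRing k] [Ring B] [Algebra k B] {x g : B}
    {c : k} (hg : g ≠ 0) (h : x * g = c • g) : c ∈ spectrum k x := fun hc ↦
  hg ((hc.mul_right_eq_zero).1 (by rw [sub_mul, h, Algebra.smul_def, sub_self]))

theorem exists_infinite_spectrum_of_orthogonalIdempotents {A : Type*} [NormedRing A]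
    [NormedAlgebra ℂ A] [CompleteSpace A] {g : ℕ → A} (hg : OrthogonalIdempotents g)
    (hg0 : ∀ n, g n ≠ 0) : ∃ x : A, (spectrum ℂ x).Infinite := by
  set c : ℕ → ℂ := fun n ↦ ((1 / 2) ^ n / (1 + ‖g n‖) : ℝ) with hc
  have denom_pos (n : ℕ) : 0 < 1 + ‖g n‖ := by positivity
  have c_ne_zero (n : ℕ) : c n ≠ 0 := by
    rw [hc, Ne, ofReal_eq_zero]
    positivity
  have norm_c (n : ℕ) : ‖c n‖ = (1 / 2) ^ n / (1 + ‖g n‖) := by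
    rw [hc, norm_real, Real.norm_of_nonneg (by positivity)]
  have tendsto_c : Filter.Tendsto c Filter.atTop (nhds 0) := by
    refine squeeze_zero_norm (fun n ↦ ?_)
      (tendsto_pow_atTop_nhds_zero_of_lt_one (r := (1 / 2 : ℝ)) (by norm_num) (by norm_num))
    rw [norm_c]
    exact div_le_self (by positivity) (le_add_of_nonneg_right (norm_nonneg _))
  have summable : Summable fun n ↦ c n • g n := by
    refine Summable.of_norm_bounded summable_geometric_two fun n ↦ ?_
    rw [norm_smul, norm_c, div_mul_eq_mul_div, div_le_iff₀ (denom_pos n)]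
    gcongr
    exact le_add_of_nonneg_left zero_le_one
  have tsum_mul (m : ℕ) : (∑' n, c n • g n) * g m = c m • g m := by
    rw [← summable.tsum_mul_right, tsum_eq_single m fun n hn ↦ by
      rw [smul_mul_assoc, hg.ortho hn, smul_zero], smul_mul_assoc, (hg.idem m).eq]
  refine ⟨∑' n, c n • g n, fun hfin ↦ ?_⟩
  have range_finite : (Set.range c).Finite := hfin.subset <| by
    rintro _ ⟨n, rfl⟩
    exact mem_spectrum_of_mul_eq_smul (hg0 n) (tsum_mul n)
  obtain ⟨n, hn⟩ := range_finite.isClosed.mem_of_tendsto tendsto_c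
    (Filter.Eventually.of_forall fun n ↦ ⟨n, rfl⟩)
  exact c_ne_zero n hn

/-- `IdempotentLT f e` is the strict order of idempotents: `f` is a proper subidempotent of `e`,
that is, `f ≠ e` and `f` lies in the corner `eRe`. -/
structure IdempotentLT {R : Type*} [Mul R] (f e : R) : Prop where
  isIdempotentElem_left : IsIdempotentElem f
  isIdempotentElem_right : IsIdempotentElem e
  ne : f ≠ e
  mul_left : e * f = f
  mul_right : f * e = f

theorem IdempotentLT.compl {R : Type*} [Ring R] {e f : R} (h : IdempotentLT f e) (hf : f ≠ 0) :
    IdempotentLT (e - f) e where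
  isIdempotentElem_left := by
    rw [IsIdempotentElem, sub_mul, mul_sub, mul_sub, h.mul_left, h.mul_right,
      h.isIdempotentElem_left.eq, h.isIdempotentElem_right.eq, sub_self, sub_zero]
  isIdempotentElem_right := h.isIdempotentElem_right
  ne := mt sub_eq_self.1 hf
  mul_left := by rw [mul_sub, h.mul_left, h.isIdempotentElem_right.eq]
  mul_right := by rw [sub_mul, h.mul_right, h.isIdempotentElem_right.eq]

theorem orthogonalIdempotents_sub_succ {R : Type*} [Ring R] {e : ℕ → R}
    (he : ∀ n, IdempotentLT (e (n + 1)) (e n)) :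
    OrthogonalIdempotents fun n ↦ e n - e (n + 1) := by
  have mul_eq {m n : ℕ} (h : m ≤ n) : e m * e n = e n ∧ e n * e m = e n := by
    induction n, h using Nat.le_induction with
    | base => exact ⟨(he m).isIdempotentElem_right, (he m).isIdempotentElem_right⟩
    | succ n _ ih =>
      constructor
      · rw [← (he n).mul_left, ← mul_assoc, ih.1]
      · rw [← (he n).mul_right, mul_assoc, ih.2]
  have mul_sub_eq_zero {m n : ℕ} (h : m < n) : (e m - e (m + 1)) * (e n - e (n + 1)) = 0 := by
    simp only [sub_mul, mul_sub, (mul_eq h.le).1, (mul_eq (h.le.trans n.le_succ)).1,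
      (mul_eq (Nat.succ_le_of_lt h)).1, (mul_eq (Nat.succ_le_of_lt (h.trans n.lt_succ_self))).1,
      sub_self]
  have sub_mul_eq_zero {m n : ℕ} (h : m < n) : (e n - e (n + 1)) * (e m - e (m + 1)) = 0 := by
    simp only [sub_mul, mul_sub, (mul_eq h.le).2, (mul_eq (h.le.trans n.le_succ)).2,
      (mul_eq (Nat.succ_le_of_lt h)).2, (mul_eq (Nat.succ_le_of_lt (h.trans n.lt_succ_self))).2,
      sub_self]
  refine ⟨fun n ↦ ?_, fun m n hmn ↦ hmn.lt_or_gt.elim mul_sub_eq_zero sub_mul_eq_zero⟩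
  by_cases h : e (n + 1) = 0
  · simpa only [h, sub_zero] using (he n).isIdempotentElem_right
  · exact ((he n).compl h).isIdempotentElem_left

theorem HasFiniteSpectra.corner {B : Type*} [Ring B] [Algebra ℂ B] (hfin : HasFiniteSpectra B)
    {e : B} (he : IsIdempotentElem e) : HasFiniteSpectra he.Corner := fun c ↦ by
  have quasispectrum_finite : (quasispectrum ℂ c.val).Finite := by
    rw [quasispectrum_eq_spectrum_union_zero]
    exact (hfin c.val).union (Set.finite_singleton 0)
  exact (quasispectrum_coe_corner he ℂ c ▸ quasispectrum_finite).subset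
    (spectrum_subset_quasispectrum ℂ c)

variable {A : Type*} [NormedRing A] [NormedAlgebra ℂ A] [CompleteSpace A]

theorem HasFiniteSpectra.wellFounded_idempotentLT (hfin : HasFiniteSpectra A) :
    WellFounded (IdempotentLT : A → A → Prop) := by
  refine wellFounded_iff_isEmpty_descending_chain.2 ⟨fun ⟨e, he⟩ ↦ ?_⟩
  obtain ⟨x, hx⟩ := exists_infinite_spectrum_of_orthogonalIdempotents
    (orthogonalIdempotents_sub_succ he) fun n ↦ sub_ne_zero.2 (he n).ne.symm
  exact hx (hfin x)

theorem isMinimalIdempotent_of_forall_idempotentLT (hss : JacobsonSemisimple A)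
    (hfin : HasFiniteSpectra A) {e : A} (he : IsIdempotentElem e) (he0 : e ≠ 0)
    (hmin : ∀ f, IdempotentLT f e → f = 0) : IsMinimalIdempotent ℂ e := by
  refine ⟨he, he0, fun x ↦ ?_⟩
  have trivial_idempotents (f : he.Corner) (hf : IsIdempotentElem f) : f = 0 ∨ f = 1 := by
    obtain ⟨hef, hfe⟩ := (Subsemigroup.mem_corner_iff he).1 f.2
    refine or_iff_not_imp_right.2 fun hf1 ↦ Subtype.ext (hmin f.val ?_)
    exact ⟨congrArg Subtype.val hf, he, fun h ↦ hf1 (Subtype.ext h), hef, hfe⟩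
  obtain ⟨c, hc⟩ := exists_eq_algebraMap_of_forall_isIdempotentElem (hss.corner he)
    (hfin.corner he) trivial_idempotents ⟨e * x * e, x, rfl⟩
  exact ⟨c, congrArg Subtype.val (hc.trans (Algebra.algebraMap_eq_smul_one c))⟩

theorem mem_closure_isMinimalIdempotent (hss : JacobsonSemisimple A)
    (hfin : HasFiniteSpectra A) {e : A} (he : IsIdempotentElem e) :
    e ∈ AddSubmonoid.closure {e : A | IsMinimalIdempotent ℂ e} := by
  induction e using hfin.wellFounded_idempotentLT.induction with
  | _ e ih =>
    rcases eq_or_ne e 0 with rfl | he0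
    · exact zero_mem _
    by_cases hmin : ∀ f, IdempotentLT f e → f = 0
    · exact AddSubmonoid.subset_closure
        (isMinimalIdempotent_of_forall_idempotentLT hss hfin he he0 hmin)
    · push Not at hmin
      obtain ⟨f, hf, hf0⟩ := hmin
      have := add_mem (ih f hf hf.isIdempotentElem_left)
        (ih (e - f) (hf.compl hf0) (hf.compl hf0).isIdempotentElem_left)
      rwa [add_sub_cancel] at this

theorem HasFiniteSpectra.finiteDimensional (hfin : HasFiniteSpectra A)
    (hss : JacobsonSemisimple A) : FiniteDimensional ℂ A :=
  finite_of_one_mem_closure_isMinimalIdempotent hss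
    (mem_closure_isMinimalIdempotent hss hfin .one)

end FiniteSpectra

section Rank

theorem encard_spectrum_le_finrank {k B : Type*} [Field k] [Ring B] [Algebra k B]
    [FiniteDimensional k B] (b : B) : (spectrum k b).encard ≤ Module.finrank k B := by
  classical
  have spectrum_subset : spectrum k b ⊆ (minpoly k b).roots.toFinset := fun z hz ↦ by
    have eval_mem := spectrum.subset_polynomial_aeval b (minpoly k b) ⟨z, hz, rfl⟩
    rw [minpoly.aeval, spectrum.mem_iff, sub_zero] at eval_mem
    have isRoot : (minpoly k b).IsRoot z := by_contra fun h ↦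
      eval_mem ((IsUnit.mk0 _ h).map (algebraMap k B))
    simpa using ⟨minpoly.ne_zero (IsIntegral.of_finite k b), isRoot⟩
  calc (spectrum k b).encard ≤ ((minpoly k b).roots.toFinset : Set k).encard :=
        Set.encard_le_encard spectrum_subset
    _ = (minpoly k b).roots.toFinset.card := Set.encard_coe_eq_coe_finsetCard _
    _ ≤ Module.finrank k B := by
      exact_mod_cast (Multiset.toFinset_card_le _).trans
        ((minpoly k b).card_roots'.trans (minpoly.natDegree_le b))

theorem srank_le_finrank_corner {B : Type*} [Ring B] [Algebra ℂ B] {p : B}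
    (hp : IsIdempotentElem p) [FiniteDimensional ℂ hp.Corner] :
    srank p ≤ Module.finrank ℂ hp.Corner := by
  refine iSup_le fun x ↦ ?_
  let c : hp.Corner := ⟨p * x * p, x, rfl⟩
  have nzSpec_eq : nzSpec (x * p) = nzSpec c := by
    calc nzSpec (x * p) = nzSpec (x * p * p) := by rw [mul_assoc, hp.eq]
      _ = nzSpec (p * (x * p)) := spectrum.nonzero_mul_comm _ _
      _ = nzSpec (p * x * p) := by rw [mul_assoc]
      _ = nzSpec c := nzSpec_coe_corner hp c
  rw [nzSpec_eq]
  exact (Set.encard_le_encard Set.sdiff_subset).trans (encard_spectrum_le_finrank _)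

variable {A : Type*} [NormedRing A] [NormedAlgebra ℂ A] [CompleteSpace A] {p s y : A}

theorem hasFiniteSpectra_corner_of_eq_mul (hp : IsIdempotentElem p) (hps : p = s * y)
    (hacc : ∀ x : A, ∀ z : ℂ, AccPt z (Filter.principal (spectrum ℂ (s * x))) → z = 0) :
    HasFiniteSpectra hp.Corner := by
  have eq_zero_of_accPt (c : hp.Corner) (z : ℂ)
      (hz : AccPt z (Filter.principal (spectrum ℂ c))) : z = 0 := by
    have mul_eq : s * (y * c.val) = c.val := by
      rw [← mul_assoc, ← hps, ((Subsemigroup.mem_corner_iff hp).1 c.2).1]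
    have spectrum_subset : spectrum ℂ c ⊆ spectrum ℂ c.val ∪ {0} := by
      rw [← quasispectrum_eq_spectrum_union_zero, quasispectrum_coe_corner]
      exact spectrum_subset_quasispectrum ℂ c
    have accPt_union := hz.mono (Filter.principal_mono.2 spectrum_subset)
    rw [← Filter.sup_principal, accPt_sup] at accPt_union
    rcases accPt_union with h | h
    · exact hacc (y * c.val) z (by rwa [mul_eq])
    · simpa using mem_closure_iff_clusterPt.2 h.clusterPt
  intro c
  by_contra hinf
  obtain ⟨z, -, hz⟩ := Set.Infinite.exists_accPt_of_subset_isCompact hinf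
    (spectrum.isCompact c) subset_rfl
  -- The spectrum of `c + 1` is that of `c` translated by `1`, so it accumulates at `z + 1`.
  have hz_add_one : AccPt (z + 1) (Filter.principal (spectrum ℂ (c + 1))) := by
    rw [← map_one (algebraMap ℂ hp.Corner), ← spectrum.add_singleton_eq, Set.add_singleton,
      ← Filter.map_principal]
    exact hz.map (continuous_add_const 1).continuousAt (add_left_injective 1)
  simpa [eq_zero_of_accPt c z hz] using eq_zero_of_accPt (c + 1) (z + 1) hz_add_one

theorem mem_socle_of_eq_mul (hss : JacobsonSemisimple A) (hp : IsIdempotentElem p)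
    (hps : p = s * y)
    (hacc : ∀ x : A, ∀ z : ℂ, AccPt z (Filter.principal (spectrum ℂ (s * x))) → z = 0) :
    p ∈ socle A :=
  have := (hasFiniteSpectra_corner_of_eq_mul hp hps hacc).finiteDimensional (hss.corner hp)
  ne_top_of_le_ne_top (ENat.natCast_ne_top _) (srank_le_finrank_corner hp)

theorem rieszProjection_mem_socle_general (hss : JacobsonSemisimple A) (s : A)
    (hacc : ∀ x : A, ∀ z : ℂ, AccPt z (Filter.principal (spectrum ℂ (s * x))) → z = 0)
    {c : ℂ} (hc : c ≠ 0) {r : ℝ} (hr : 0 < r)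
    (hsep : ∀ z ∈ spectrum ℂ s, ‖z - c‖ ≤ r → z = c) : rieszProjection s c r ∈ socle A := by
  have punctured_subset : Metric.closedBall c r \ {c} ⊆ resolventSet ℂ s := fun z hz ↦
    by_contra fun hzs ↦ hz.2 (hsep z hzs (mem_closedBall_iff_norm.1 hz.1))
  obtain ⟨y, -, hy⟩ := exists_commute_rieszProjection_eq_mul hr hc punctured_subset
  exact mem_socle_of_eq_mul hss (isIdempotentElem_rieszProjection hr punctured_subset) hy hacc

end Rank

theorem rieszProjection_mem_socle
    {A : Type*} [NormedRing A] [NormOneClass A] [NormedAlgebra ℂ A] [CompleteSpace A]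
    (hss : JacobsonSemisimple A) (s : A)
    (hacc : ∀ x : A, ∀ z : ℂ, AccPt z (Filter.principal (spectrum ℂ (s * x))) → z = 0)
    (lam : ℂ) (hlam : lam ∈ spectrum ℂ s) (hlam0 : lam ≠ 0)
    (r : ℝ) (hr : 0 < r)
    (hsep : ∀ z ∈ spectrum ℂ s, ‖z - lam‖ ≤ r → z = lam) :
    ((2 * Real.pi * Complex.I : ℂ)⁻¹ •
        circleIntegral (fun z => resolvent s z) lam r) ∈ socle A := by
  exact rieszProjection_mem_socle_general hss s hacc hlam0 hr hsep
end
end
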